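/- arXiv:2203.16836 — 2 statements merged into one kernel-verified Lean document; each statement's English description precedes it below -/
import Mathlib

section
/- Let 𝒜 be a complete normed algebra over ℂ with unit, and let A, B ∈ 𝒜 satisfy ⁅A, ⁅A, B⁆⁆ = 0 and ⁅B, ⁅A, B⁆⁆ = 0. Then for every real number η, ⁅exp(iηA), exp(iηB)⁆ = exp(iηB) · (exp(−η²·⁅A, B⁆) − 1) · exp(iηA). -/
open NormedSpace Complex

/-!
Left and right multiplication by `X` are commuting operators whose difference is `ad X = ⁅X, ·⁆`,
so exponentiating `L_X = R_X + ad X` gives `exp X * Y = (exp (ad X) Y) * exp X`. When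
`⁅X, ⁅X, Y⁆⁆ = 0` the series for `exp (ad X) Y` stops at `Y + ⁅X, Y⁆`; thus `exp X` intertwines `Y`
with `Y + ⁅X, Y⁆`, hence also their exponentials, and `exp (Y + ⁅X, Y⁆)` factors because `Y`
commutes with `⁅X, Y⁆`.
-/

open scoped Nat

section OperatorExponential

variable {𝕂 : Type*} [NontriviallyNormedField 𝕂] [CharZero 𝕂] [ContinuousSMul ℚ 𝕂]

section BanachSpace

variable {E : Type*} [NormedAddCommGroup E] [NormedSpace 𝕂 E] [CompleteSpace E]

theorem hasSum_exp_clm_apply (T : E →L[𝕂] E) (v : E) :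
    HasSum (fun n : ℕ => (n !⁻¹ : 𝕂) • T^[n] v) (exp T v) := by
  simpa only [ContinuousLinearMap.apply_apply, smul_apply,
    FunLike.coe_pow_eq_iterate] using
    (ContinuousLinearMap.apply 𝕂 E v).hasSum (exp_series_hasSum_exp' (𝕂 := 𝕂) T)

theorem exp_clm_apply_of_apply_apply_eq_zero {T : E →L[𝕂] E} {v : E} (h : T (T v) = 0) :
    exp T v = v + T v := by
  have iterate_eq_zero : ∀ n ∉ Finset.range 2, (n !⁻¹ : 𝕂) • T^[n] v = 0 := by
    intro n hn
    obtain ⟨k, rfl⟩ := Nat.exists_eq_add_of_le' (not_lt.mp (Finset.mem_range.not.mp hn))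
    simp [Function.iterate_add_apply, h]
  rw [(hasSum_exp_clm_apply T v).unique (hasSum_sum_of_ne_finset_zero iterate_eq_zero)]
  simp [Finset.sum_range_succ]

end BanachSpace

section MultiplicationOperators

variable {𝒜 : Type*} [NormedRing 𝒜] [NormedAlgebra 𝕂 𝒜] [CompleteSpace 𝒜]

theorem exp_mulLeft_apply (X Y : 𝒜) :
    exp (ContinuousLinearMap.mul 𝕂 𝒜 X) Y = exp X * Y := by
  have iterate_apply (n : ℕ) : (ContinuousLinearMap.mul 𝕂 𝒜 X)^[n] Y = X ^ n * Y :=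
    congrFun (mul_left_iterate X n) Y
  refine (hasSum_exp_clm_apply _ Y).unique ?_
  simpa only [iterate_apply, smul_mul_assoc] using
    (exp_series_hasSum_exp' (𝕂 := 𝕂) X).mul_right Y

theorem exp_mulRight_apply (X Y : 𝒜) :
    exp ((ContinuousLinearMap.mul 𝕂 𝒜).flip X) Y = Y * exp X := by
  have iterate_apply (n : ℕ) : ((ContinuousLinearMap.mul 𝕂 𝒜).flip X)^[n] Y = Y * X ^ n :=
    congrFun (mul_right_iterate X n) Y
  refine (hasSum_exp_clm_apply _ Y).unique ?_
  simpa only [iterate_apply, mul_smul_comm] using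
    (exp_series_hasSum_exp' (𝕂 := 𝕂) X).mul_left Y

end MultiplicationOperators

end OperatorExponential

/-- The adjoint action `Y ↦ ⁅X, Y⁆` as a bounded operator, so that it can be exponentiated; it is
defined as left minus right multiplication by `X`. -/
noncomputable def adCLM (𝕂 : Type*) [NontriviallyNormedField 𝕂] {𝒜 : Type*} [NormedRing 𝒜]
    [NormedAlgebra 𝕂 𝒜] (X : 𝒜) : 𝒜 →L[𝕂] 𝒜 :=
  ContinuousLinearMap.mul 𝕂 𝒜 X - (ContinuousLinearMap.mul 𝕂 𝒜).flip X

section AdjointAction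

variable {𝕂 : Type*} [NontriviallyNormedField 𝕂] {𝒜 : Type*} [NormedRing 𝒜] [NormedAlgebra 𝕂 𝒜]

theorem adCLM_apply (X Y : 𝒜) : adCLM 𝕂 X Y = ⁅X, Y⁆ := rfl

theorem commute_mulRight_adCLM (X : 𝒜) :
    Commute ((ContinuousLinearMap.mul 𝕂 𝒜).flip X) (adCLM 𝕂 X) := by
  have commute_right_left :
      Commute ((ContinuousLinearMap.mul 𝕂 𝒜).flip X) (ContinuousLinearMap.mul 𝕂 𝒜 X) :=
    ContinuousLinearMap.ext fun Y => mul_assoc X Y X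
  exact commute_right_left.sub_right (Commute.refl _)

end AdjointAction

theorem smul_lie_smul {R 𝒜 : Type*} [CommSemiring R] [Ring 𝒜] [Algebra R 𝒜] (s t : R) (A B : 𝒜) :
    ⁅s • A, t • B⁆ = (s * t) • ⁅A, B⁆ := by
  rw [Ring.lie_def, Ring.lie_def, smul_mul_smul_comm, smul_mul_smul_comm, mul_comm t s, smul_sub]

section BanachAlgebra

variable {𝒜 : Type*} [NormedRing 𝒜] [NormedAlgebra ℚ 𝒜] [CompleteSpace 𝒜]

theorem semiconjBy_exp_exp_adCLM (X Y : 𝒜) :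
    SemiconjBy (exp X) Y (exp (adCLM ℚ X) Y) :=
  calc
    exp X * Y = exp (ContinuousLinearMap.mul ℚ 𝒜 X) Y := (exp_mulLeft_apply X Y).symm
    _ = exp ((ContinuousLinearMap.mul ℚ 𝒜).flip X + adCLM ℚ X) Y := by
      rw [adCLM, add_sub_cancel]
    _ = exp ((ContinuousLinearMap.mul ℚ 𝒜).flip X) (exp (adCLM ℚ X) Y) := by
      rw [exp_add_of_commute (commute_mulRight_adCLM X), mul_apply_eq_comp]
    _ = exp (adCLM ℚ X) Y * exp X := exp_mulRight_apply X _

theorem semiconjBy_exp_add_lie {X Y : 𝒜} (h : Commute X ⁅X, Y⁆) :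
    SemiconjBy (exp X) Y (Y + ⁅X, Y⁆) := by
  have ad_ad_eq_zero : adCLM ℚ X (adCLM ℚ X Y) = 0 := by
    rw [adCLM_apply, adCLM_apply, commute_iff_lie_eq.mp h]
  rw [← adCLM_apply (𝕂 := ℚ), ← exp_clm_apply_of_apply_apply_eq_zero ad_ad_eq_zero]
  exact semiconjBy_exp_exp_adCLM X Y

theorem exp_mul_exp_eq_exp_mul_exp_lie_mul_exp {X Y : 𝒜}
    (hX : Commute X ⁅X, Y⁆) (hY : Commute Y ⁅X, Y⁆) :
    exp X * exp Y = exp Y * exp ⁅X, Y⁆ * exp X := by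
  rw [(semiconjBy_exp_add_lie hX).exp_right.eq, exp_add_of_commute hY]

theorem commutator_exp_glauber_general {R : Type*} [CommSemiring R] [Algebra R 𝒜] {A B : 𝒜}
    (hA : ⁅A, ⁅A, B⁆⁆ = 0) (hB : ⁅B, ⁅A, B⁆⁆ = 0) (s t : R) :
    ⁅exp (s • A), exp (t • B)⁆ =
      exp (t • B) * (exp ((s * t) • ⁅A, B⁆) - 1) * exp (s • A) := by
  have commute_left : Commute (s • A) ⁅s • A, t • B⁆ := by
    rw [smul_lie_smul]
    exact ((commute_iff_lie_eq.mpr hA).smul_left s).smul_right (s * t)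
  have commute_right : Commute (t • B) ⁅s • A, t • B⁆ := by
    rw [smul_lie_smul]
    exact ((commute_iff_lie_eq.mpr hB).smul_left t).smul_right (s * t)
  rw [Ring.lie_def, exp_mul_exp_eq_exp_mul_exp_lie_mul_exp commute_left commute_right,
    smul_lie_smul, mul_sub_one, sub_mul]

end BanachAlgebra

/-- Commutator form of the Glauber identity in a unital complex Banach algebra:
if `⁅A, ⁅A, B⁆⁆ = 0` and `⁅B, ⁅A, B⁆⁆ = 0`, then for every real `η`,
`⁅exp(iηA), exp(iηB)⁆ = exp(iηB) * (exp(−η²•⁅A,B⁆) − 1) * exp(iηA)`. -/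
theorem commutator_exp_glauber {𝒜 : Type*} [NormedRing 𝒜] [NormedAlgebra ℂ 𝒜]
    [CompleteSpace 𝒜] (A B : 𝒜)
    (hA : ⁅A, ⁅A, B⁆⁆ = 0) (hB : ⁅B, ⁅A, B⁆⁆ = 0) (η : ℝ) :
    ⁅exp (((η : ℂ) * I) • A), exp (((η : ℂ) * I) • B)⁆ =
      exp (((η : ℂ) * I) • B) * (exp ((-(η : ℂ) ^ 2) • ⁅A, B⁆) - 1) *
        exp (((η : ℂ) * I) • A) := by
  let +nondep : NormedAlgebra ℚ 𝒜 := .restrictScalars ℚ ℂ 𝒜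
  have sq_eq : -(η : ℂ) ^ 2 = (η * I) * (η * I) := by rw [← sq, mul_pow, I_sq, mul_neg_one]
  exact sq_eq ▸ commutator_exp_glauber_general hA hB _ _
end

section
/- For all real numbers η and ε, setting s = sinh(2ε) and c = cosh(2ε), the 4×4 complex matrix T defined entrywise (rows then columns, indices 1..4) by row 1 = (e^{−η²s}−1, e^{−iη²c}−1, e^{η²s}−1, e^{iη²c}−1), row 2 = (e^{iη²c}−1, e^{−η²s}−1, e^{−iη²c}−1, e^{η²s}−1), row 3 = (e^{η²s}−1, e^{iη²c}−1, e^{−η²s}−1, e^{−iη²c}−1), row 4 = (e^{−iη²c}−1, e^{η²s}−1, e^{iη²c}−1, e^{−η²s}−1), satisfies the spectral decomposition T = λ₁·P₁ + λ₂·P₂ + λ₃·P₃ + λ₄·P₄, where λ₁ = 2(cosh(η²s) − cos(η²c)), λ₂ = 2(cosh(η²s) + cos(η²c) − 2), λ₃ = −2(sinh(η²s) − sin(η²c)), λ₄ = −2(sinh(η²s) + sin(η²c)), and Pₖ is the rank-one matrix with entries (Pₖ)_{a,b} = conj(wₖ(a))·wₖ(b) for the row vectors w₁ = ½(1,−1,1,−1),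 w₂ = ½(1,1,1,1), w₃ = ½(1,−i,−1,i), w₄ = ½(1,i,−1,−i) in ℂ⁴. -/
open Complex

/-- The Hermitian circulant matrix `T` of the paper, with `s = sinh(2ε)`, `c = cosh(2ε)`. -/
noncomputable def gkpT (η ε : ℝ) : Matrix (Fin 4) (Fin 4) ℂ :=
  let s : ℝ := Real.sinh (2 * ε)
  let c : ℝ := Real.cosh (2 * ε)
  !![exp (-(η ^ 2 * s : ℝ)) - 1, exp (-(I * (η ^ 2 * c : ℝ))) - 1,
       exp ((η ^ 2 * s : ℝ)) - 1, exp (I * (η ^ 2 * c : ℝ)) - 1;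
     exp (I * (η ^ 2 * c : ℝ)) - 1, exp (-(η ^ 2 * s : ℝ)) - 1,
       exp (-(I * (η ^ 2 * c : ℝ))) - 1, exp ((η ^ 2 * s : ℝ)) - 1;
     exp ((η ^ 2 * s : ℝ)) - 1, exp (I * (η ^ 2 * c : ℝ)) - 1,
       exp (-(η ^ 2 * s : ℝ)) - 1, exp (-(I * (η ^ 2 * c : ℝ))) - 1;
     exp (-(I * (η ^ 2 * c : ℝ))) - 1, exp ((η ^ 2 * s : ℝ)) - 1,
       exp (I * (η ^ 2 * c : ℝ)) - 1, exp (-(η ^ 2 * s : ℝ)) - 1]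

/-- The eigenvalues `λ₁, λ₂, λ₃, λ₄` of `T`. -/
noncomputable def gkpLambda (η ε : ℝ) : Fin 4 → ℝ :=
  let s : ℝ := Real.sinh (2 * ε)
  let c : ℝ := Real.cosh (2 * ε)
  ![2 * (Real.cosh (η ^ 2 * s) - Real.cos (η ^ 2 * c)),
    2 * (Real.cosh (η ^ 2 * s) + Real.cos (η ^ 2 * c) - 2),
    -2 * (Real.sinh (η ^ 2 * s) - Real.sin (η ^ 2 * c)),
    -2 * (Real.sinh (η ^ 2 * s) + Real.sin (η ^ 2 * c))]

/-- The eigenvectors `w₁, w₂, w₃, w₄` (as row vectors in `ℂ⁴`). -/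
noncomputable def gkpW : Fin 4 → Fin 4 → ℂ :=
  ![![1 / 2, -(1 / 2), 1 / 2, -(1 / 2)],
    ![1 / 2, 1 / 2, 1 / 2, 1 / 2],
    ![1 / 2, -(I / 2), -(1 / 2), I / 2],
    ![1 / 2, I / 2, -(1 / 2), -(I / 2)]]

/-- The rank-one spectral projector `Pₖ` with entries `(Pₖ)_{a,b} = conj(wₖ(a))·wₖ(b)`. -/
noncomputable def gkpP (k : Fin 4) : Matrix (Fin 4) (Fin 4) ℂ :=
  Matrix.of fun a b => (starRingEnd ℂ) (gkpW k a) * gkpW k b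

/-!
A circulant matrix `circulant Φ` on `ZMod N` is convolution by `Φ`, so discrete Fourier inversion
of `Φ` expands it over the rank-one projectors onto the characters of `ZMod N`, the coefficients
being the values of the Fourier transform of `Φ`. The matrix `T` is circulant on `ZMod 4`, its
vectors `wₖ` are the conjugates of the four normalized characters `a ↦ I ^ (j * a)`, and its
eigenvalues `λₖ` are the four-point Fourier transform of its first column.
-/

open Matrix
open ZMod (stdAddChar)
open scoped ZMod

theorem circulant_eq_sum_dft_smul_vecMulVec {N : ℕ} [NeZero N] (Φ : ZMod N → ℂ) :
    circulant Φ = ∑ j, 𝓕 Φ j •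
      (N : ℂ)⁻¹ • vecMulVec (stdAddChar.mulShift j) (star ⇑(stdAddChar.mulShift j)) := by
  ext a b
  have character_sub (j : ZMod N) :
      stdAddChar (j * (a - b)) = stdAddChar (j * a) * star (stdAddChar (j * b)) := by
    rw [mul_sub, sub_eq_add_neg, AddChar.map_add_eq_mul, AddChar.map_neg_eq_conj,
      starRingEnd_apply]
  calc circulant Φ a b = 𝓕⁻ (𝓕 Φ) (a - b) := by
        rw [LinearEquiv.symm_apply_apply, circulant_apply]
    _ = ∑ j, 𝓕 Φ j * ((N : ℂ)⁻¹ * (stdAddChar (j * a) * star (stdAddChar (j * b)))) := by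
        simp only [ZMod.invDFT_apply, smul_eq_mul, Finset.mul_sum, character_sub]
        exact Finset.sum_congr rfl fun j _ ↦ by ring
    _ = _ := by
        simp only [Matrix.sum_apply, Matrix.smul_apply, smul_eq_mul, vecMulVec_apply, Pi.star_apply,
          AddChar.mulShift_apply]

theorem stdAddChar_four_one : stdAddChar (1 : ZMod 4) = I := by
  calc stdAddChar (1 : ZMod 4) = exp (2 * Real.pi * I * 1 / 4) := by
        exact_mod_cast ZMod.stdAddChar_coe (N := 4) 1
    _ = exp (Real.pi / 2 * I) := by ring_nf
    _ = I := exp_pi_div_two_mul_I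

theorem stdAddChar_four_apply (a : ZMod 4) : stdAddChar a = I ^ a.val := by
  rw [← stdAddChar_four_one, ← AddChar.map_nsmul_eq_pow, nsmul_one, ZMod.natCast_zmod_val]

theorem stdAddChar_four : ⇑(stdAddChar (N := 4)) = ![1, I, -1, -I] := by
  funext a
  rw [stdAddChar_four_apply]
  fin_cases a
  exacts [pow_zero I, pow_one I, I_sq, I_pow_three]

theorem dft_four (Φ : ZMod 4 → ℂ) :
    𝓕 Φ = ![Φ 0 + Φ 1 + Φ 2 + Φ 3, Φ 0 - I * Φ 1 - Φ 2 + I * Φ 3,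
      Φ 0 - Φ 1 + Φ 2 - Φ 3, Φ 0 + I * Φ 1 - Φ 2 - I * Φ 3] := by
  have sum_four (f : ZMod 4 → ℂ) : ∑ j, f j = f 0 + f 1 + f 2 + f 3 := Fin.sum_univ_four f
  funext k
  rw [ZMod.dft_apply, sum_four, stdAddChar_four]
  fin_cases k
  · change 1 * Φ 0 + 1 * Φ 1 + 1 * Φ 2 + 1 * Φ 3 = Φ 0 + Φ 1 + Φ 2 + Φ 3
    ring
  · change 1 * Φ 0 + -I * Φ 1 + -1 * Φ 2 + I * Φ 3 = Φ 0 - I * Φ 1 - Φ 2 + I * Φ 3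
    ring
  · change 1 * Φ 0 + -1 * Φ 1 + 1 * Φ 2 + -1 * Φ 3 = Φ 0 - Φ 1 + Φ 2 - Φ 3
    ring
  · change 1 * Φ 0 + I * Φ 1 + -1 * Φ 2 + -I * Φ 3 = Φ 0 + I * Φ 1 - Φ 2 - I * Φ 3
    ring

/-- The first column of `T`, which generates it as a circulant matrix, with `x` for `η² s` and `y`
for `η² c`. It is indexed by `ZMod 4`, definitionally `Fin 4`, so that `𝓕` applies to it. -/
noncomputable def gkpSymbol (x y : ℂ) : ZMod 4 → ℂ :=
  ![exp (-x) - 1, exp (I * y) - 1, exp x - 1, exp (-(I * y)) - 1]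

theorem dft_gkpSymbol (x y : ℂ) :
    𝓕 (gkpSymbol x y) = ![2 * (cosh x + cos y - 2), -2 * (sinh x - sin y),
      2 * (cosh x - cos y), -2 * (sinh x + sin y)] := by
  have exp_I_mul : exp (I * y) = cos y + sin y * I := by rw [mul_comm, exp_mul_I]
  have exp_neg_I_mul : exp (-(I * y)) = cos y - sin y * I := by
    rw [← mul_neg, mul_comm, exp_mul_I, cos_neg, sin_neg, neg_mul, sub_eq_add_neg]
  have symbol_eq : gkpSymbol x y = ![cosh x - sinh x - 1, cos y + sin y * I - 1,
      cosh x + sinh x - 1, cos y - sin y * I - 1] := by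
    rw [gkpSymbol, exp_I_mul, exp_neg_I_mul, cosh_sub_sinh, cosh_add_sinh]
  rw [dft_four, symbol_eq]
  funext j
  fin_cases j
  all_goals simp only [Fin.zero_eta, Fin.mk_one, Fin.reduceFinMk, cons_val]
  · ring
  · linear_combination (-2 * sin y) * I_sq
  · ring
  · linear_combination (2 * sin y) * I_sq

theorem gkpT_eq_circulant (η ε : ℝ) :
    gkpT η ε = circulant
      (gkpSymbol (η ^ 2 * Real.sinh (2 * ε) : ℝ) (η ^ 2 * Real.cosh (2 * ε) : ℝ)) := by
  ext a b
  fin_cases a <;> fin_cases b <;> rfl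

/-- The frequency `j` for which `conj wₖ` is the normalized character `a ↦ I ^ (j * a) / 2`; it
translates the paper's ordering of the eigenpairs into that of `𝓕`. -/
def gkpFrequency : Fin 4 → ZMod 4 := ![2, 0, 1, 3]

theorem gkpFrequency_bijective : Function.Bijective gkpFrequency := by
  decide

theorem dft_gkpSymbol_gkpFrequency (η ε : ℝ) (k : Fin 4) :
    𝓕 (gkpSymbol (η ^ 2 * Real.sinh (2 * ε) : ℝ) (η ^ 2 * Real.cosh (2 * ε) : ℝ))
      (gkpFrequency k) = gkpLambda η ε k := by
  rw [dft_gkpSymbol]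
  fin_cases k <;> simp [gkpFrequency, gkpLambda]

theorem gkpW_eq_gkpW_two_mul (k : Fin 4) (a : ZMod 4) : gkpW k a = gkpW 2 (gkpFrequency k * a) := by
  fin_cases k <;> fin_cases a <;> rfl

theorem gkpW_two_eq_star_stdAddChar (a : ZMod 4) : gkpW 2 a = 2⁻¹ * star (stdAddChar a) := by
  rw [stdAddChar_four]
  fin_cases a <;> simp [gkpW, div_eq_inv_mul]

theorem gkpW_eq_star_stdAddChar (k : Fin 4) (a : ZMod 4) :
    gkpW k a = 2⁻¹ * star (stdAddChar (gkpFrequency k * a)) := by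
  rw [gkpW_eq_gkpW_two_mul, gkpW_two_eq_star_stdAddChar]

theorem gkpP_eq_smul_vecMulVec (k : Fin 4) :
    gkpP k = ((4 : ℕ) : ℂ)⁻¹ • vecMulVec (stdAddChar.mulShift (gkpFrequency k))
      (star ⇑(stdAddChar.mulShift (gkpFrequency k))) := by
  refine Matrix.ext fun (a b : ZMod 4) ↦ ?_
  calc gkpP k a b = star (gkpW k a) * gkpW k b := rfl
    _ = ((4 : ℕ) : ℂ)⁻¹ *
          (stdAddChar (gkpFrequency k * a) * star (stdAddChar (gkpFrequency k * b))) := by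
        rw [gkpW_eq_star_stdAddChar, gkpW_eq_star_stdAddChar, star_mul', star_star, star_inv₀,
          star_ofNat]
        push_cast
        ring
    _ = _ := rfl

/-- Spectral decomposition `T = λ₁·P₁ + λ₂·P₂ + λ₃·P₃ + λ₄·P₄`. -/
theorem gkpT_spectral_decomposition (η ε : ℝ) :
    gkpT η ε =
      (gkpLambda η ε 0 : ℂ) • gkpP 0 + (gkpLambda η ε 1 : ℂ) • gkpP 1 +
        (gkpLambda η ε 2 : ℂ) • gkpP 2 + (gkpLambda η ε 3 : ℂ) • gkpP 3 := by
  rw [gkpT_eq_circulant, circulant_eq_sum_dft_smul_vecMulVec, ← gkpFrequency_bijective.sum_comp]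
  simp only [dft_gkpSymbol_gkpFrequency, ← gkpP_eq_smul_vecMulVec]
  exact Fin.sum_univ_four _
end
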